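/- Fix d ∈ ℕ, d ≥ 1, and n ∈ ℕ, n ≥ 1. Then sup{ F_n(S) : S ⊆ ℤ^d, |S| = n^d } = max{ F_n(S) : S ⊆ {1,…,n^d}^d, |S| = n^d }; in particular the supremum over all n^d-element subsets of the integer lattice ℤ^d is attained on an n^d-element subset of the finite grid {1,…,n^d}^d. -/

import Mathlib

/-- Euclidean distance between two points of the integer lattice `ℤ^d`. -/
noncomputable def zdist {d : ℕ} (x y : Fin d → ℤ) : ℝ :=
  Real.sqrt (∑ i, ((x i : ℝ) - (y i : ℝ)) ^ 2)

/-- The grid `{1,…,n}^d` as a finset of `ℤ^d`. -/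
noncomputable def grid (d n : ℕ) : Finset (Fin d → ℤ) :=
  Fintype.piFinset fun _ => Finset.Icc 1 (n : ℤ)

/-- `F_n(S)`: the least Lipschitz constant (Euclidean metric) of a surjection of `S`
onto the grid `{1,…,n}^d`. -/
noncomputable def Fleast (d n : ℕ) (S : Finset (Fin d → ℤ)) : ℝ :=
  sInf {L : ℝ | ∃ f : (Fin d → ℤ) → (Fin d → ℤ),
    (∀ x ∈ S, f x ∈ grid d n) ∧
    (∀ y ∈ grid d n, ∃ x ∈ S, f x = y) ∧
    (∀ x ∈ S, ∀ y ∈ S, zdist (f x) (f y) ≤ L * zdist x y)}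

/-!
Replace each coordinate of each point of `S` by its rank among the values of that coordinate on `S`.
Distinct integers are at least `1` apart, so this compression does not increase distances; it is
injective on `S`, and its image lies in `{1,…,|S|}^d`. Precomposing with it turns a surjection of
the image onto the grid into a surjection of `S` with the same Lipschitz bound, so compressing `S`
does not decrease `F_n`. Hence it suffices to maximise `F_n` over the finitely many subsets of
`{1,…,|S|}^d`.
-/

open Set

section Rank

variable {α : Type*} [LinearOrder α] {T : Finset α} {s t : α}

/-- The rank of `t` in the finite set `T`: the number of elements of `T` that are at most `t`. The
elements of `T` themselves have ranks `1, …, |T|`. -/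
def rankIn (T : Finset α) (t : α) : ℕ :=
  (T.filter (· ≤ t)).card

lemma rankIn_mono (T : Finset α) : Monotone (rankIn T) := fun _ _ hst ↦
  Finset.card_le_card (Finset.monotone_filter_right T fun _ _ has ↦ has.trans hst)

lemma rankIn_lt_rankIn (ht : t ∈ T) (hst : s < t) : rankIn T s < rankIn T t := by
  refine Finset.card_lt_card (Finset.ssubset_iff_of_subset ?_ |>.mpr ⟨t, ?_, ?_⟩)
  · exact Finset.monotone_filter_right T fun _ _ has ↦ has.trans hst.le
  · simp [ht]
  · simp [hst]

lemma rankIn_injOn (T : Finset α) : InjOn (rankIn T) T :=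
  StrictMonoOn.injOn fun _ _ _ ht hst ↦ rankIn_lt_rankIn ht hst

lemma rankIn_pos (ht : t ∈ T) : 0 < rankIn T t :=
  Finset.card_pos.mpr ⟨t, by simp [ht]⟩

lemma rankIn_le_card (T : Finset α) (t : α) : rankIn T t ≤ T.card :=
  Finset.card_filter_le _ _

lemma rankIn_le_add_card_Ioc [LocallyFiniteOrder α] (T : Finset α) (s t : α) :
    rankIn T t ≤ rankIn T s + (Finset.Ioc s t).card := by
  have hsubset : T.filter (· ≤ t) ⊆ T.filter (· ≤ s) ∪ Finset.Ioc s t := fun a ha ↦ by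
    obtain ⟨haT, hat⟩ := Finset.mem_filter.mp ha
    rcases le_or_gt a s with has | hsa
    · simp [haT, has]
    · simp [hsa, hat]
  exact (Finset.card_le_card hsubset).trans (Finset.card_union_le _ _)

lemma abs_rankIn_sub_rankIn_le (T : Finset ℤ) (s t : ℤ) :
    |(rankIn T s : ℤ) - rankIn T t| ≤ |s - t| := by
  wlog hst : s ≤ t generalizing s t
  · rw [abs_sub_comm, abs_sub_comm s]
    exact this t s (le_of_not_ge hst)
  have hmono := rankIn_mono T hst
  have hgrowth := rankIn_le_add_card_Ioc T s t
  rw [Int.card_Ioc] at hgrowth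
  rw [abs_of_nonpos (by lia), abs_of_nonpos (by lia)]
  lia

end Rank

section Lattice

variable {d n : ℕ} {x y : Fin d → ℤ}

lemma mem_grid : x ∈ grid d n ↔ ∀ i, 1 ≤ x i ∧ x i ≤ n := by
  simp only [grid, Fintype.mem_piFinset, Finset.mem_Icc]

lemma card_grid (d n : ℕ) : (grid d n).card = n ^ d := by
  simp [grid, Fintype.card_piFinset]

lemma zdist_nonneg (x y : Fin d → ℤ) : 0 ≤ zdist x y := Real.sqrt_nonneg _

lemma zdist_self (x : Fin d → ℤ) : zdist x x = 0 := by simp [zdist]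

lemma zdist_pos (hxy : x ≠ y) : 0 < zdist x y := by
  obtain ⟨i, hi⟩ := Function.ne_iff.mp hxy
  have hsub : (x i : ℝ) - y i ≠ 0 := sub_ne_zero.mpr (Int.cast_injective.ne hi)
  exact Real.sqrt_pos.mpr <|
    Finset.sum_pos' (fun _ _ ↦ sq_nonneg _) ⟨i, Finset.mem_univ i, by positivity⟩

lemma zdist_le_zdist_of_abs_sub_le {x' y' : Fin d → ℤ}
    (h : ∀ i, |x' i - y' i| ≤ |x i - y i|) : zdist x' y' ≤ zdist x y :=
  Real.sqrt_le_sqrt <| Finset.sum_le_sum fun i _ ↦ by exact_mod_cast sq_le_sq.mpr (h i)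

end Lattice

section Compression

variable {d : ℕ}

/-- The coordinatewise compression determined by `S ⊆ ℤ^d`: the `i`-th coordinate of a point is
replaced by its rank among the `i`-th coordinates of the points of `S`. -/
def compress (S : Finset (Fin d → ℤ)) (x : Fin d → ℤ) : Fin d → ℤ :=
  fun i ↦ rankIn (S.image (· i)) (x i)

lemma compress_injOn (S : Finset (Fin d → ℤ)) : InjOn (compress S) S := by
  intro x hx y hy hxy
  funext i
  exact rankIn_injOn (S.image (· i)) (Finset.mem_image_of_mem (· i) hx)
    (Finset.mem_image_of_mem (· i) hy) (Nat.cast_injective (congrFun hxy i))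

lemma zdist_compress_le (S : Finset (Fin d → ℤ)) (x y : Fin d → ℤ) :
    zdist (compress S x) (compress S y) ≤ zdist x y :=
  zdist_le_zdist_of_abs_sub_le fun _ ↦ abs_rankIn_sub_rankIn_le _ _ _

lemma image_compress_subset_grid (S : Finset (Fin d → ℤ)) :
    S.image (compress S) ⊆ grid d S.card := by
  refine Finset.image_subset_iff.mpr fun x hx ↦ mem_grid.mpr fun i ↦ ⟨?_, ?_⟩
  · exact Nat.one_le_cast.mpr (rankIn_pos (Finset.mem_image_of_mem (· i) hx))
  · exact Nat.cast_le.mpr ((rankIn_le_card _ _).trans Finset.card_image_le)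

end Compression

lemma exists_mapsTo_surjOn_of_card_le {α β : Type*} {S : Finset α} {T : Finset β}
    (hT : T.Nonempty) (hcard : T.card ≤ S.card) :
    ∃ f : α → β, MapsTo f S T ∧ SurjOn f S T := by
  obtain ⟨e⟩ : Nonempty (T ↪ S) := Function.Embedding.nonempty_of_card_le (by simpa using hcard)
  have : Nonempty T := hT.to_subtype
  let g : S → T := Function.invFun e
  have hg : Function.Surjective g := Function.invFun_surjective e.injective
  let f : α → β := Function.extend Subtype.val (fun x ↦ (g x : β)) fun _ ↦ hT.choose
  have hf (x : S) : f x = g x := Subtype.val_injective.extend_apply _ _ x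
  refine ⟨f, fun x hx ↦ ?_, fun y hy ↦ ?_⟩
  · rw [hf ⟨x, hx⟩]
    exact (g ⟨x, hx⟩).2
  · obtain ⟨x, hx⟩ := hg ⟨y, hy⟩
    exact ⟨x, x.2, by rw [hf, hx]⟩

section LipschitzSurjection

variable {d e k : ℕ} {S : Finset (Fin d → ℤ)} {T : Finset (Fin k → ℤ)}

/-- The Lipschitz bounds of surjections of `S ⊆ ℤ^d` onto `T ⊆ ℤ^k`: the set of which `Fleast` takes
the infimum when `T` is a grid. As there, maps are defined on the whole lattice and only their
values on `S` matter. -/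
def lipschitzBounds (S : Finset (Fin d → ℤ)) (T : Finset (Fin k → ℤ)) : Set ℝ :=
  {L | ∃ f : (Fin d → ℤ) → (Fin k → ℤ), MapsTo f S T ∧ SurjOn f S T ∧
    ∀ x ∈ S, ∀ y ∈ S, zdist (f x) (f y) ≤ L * zdist x y}

lemma Fleast_eq_sInf_lipschitzBounds (n : ℕ) (S : Finset (Fin d → ℤ)) :
    Fleast d n S = sInf (lipschitzBounds S (grid d n)) := rfl

lemma exists_forall_zdist_le_mul (S : Finset (Fin d → ℤ)) (f : (Fin d → ℤ) → (Fin k → ℤ)) :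
    ∃ L : ℝ, ∀ x ∈ S, ∀ y ∈ S, zdist (f x) (f y) ≤ L * zdist x y := by
  let ratio (p : (Fin d → ℤ) × (Fin d → ℤ)) : ℝ := zdist (f p.1) (f p.2) / zdist p.1 p.2
  obtain ⟨L, hL⟩ := ((S ×ˢ S).image ratio).exists_le
  refine ⟨L, fun x hx y hy ↦ ?_⟩
  rcases eq_or_ne x y with rfl | hxy
  · simp only [zdist_self, mul_zero, le_refl]
  · have hratio : ratio (x, y) ≤ L :=
      hL _ (Finset.mem_image_of_mem ratio (Finset.mk_mem_product hx hy))
    exact (div_le_iff₀ (zdist_pos hxy)).mp hratio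

lemma lipschitzBounds_nonempty (hT : T.Nonempty) (hcard : T.card ≤ S.card) :
    (lipschitzBounds S T).Nonempty := by
  obtain ⟨f, hmaps, hsurj⟩ := exists_mapsTo_surjOn_of_card_le hT hcard
  obtain ⟨L, hL⟩ := exists_forall_zdist_le_mul S f
  exact ⟨L, f, hmaps, hsurj, hL⟩

lemma nonneg_of_mem_lipschitzBounds (hS : (S : Set (Fin d → ℤ)).Nontrivial) {L : ℝ}
    (hL : L ∈ lipschitzBounds S T) : 0 ≤ L := by
  obtain ⟨x, hx, y, hy, hxy⟩ := hS
  obtain ⟨f, -, -, hf⟩ := hL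
  exact nonneg_of_mul_nonneg_left ((zdist_nonneg _ _).trans (hf x hx y hy)) (zdist_pos hxy)

-- On at most one point every real number is a Lipschitz bound, and `sInf univ = 0` in `ℝ`.
lemma sInf_lipschitzBounds_of_subsingleton (hS : (S : Set (Fin d → ℤ)).Subsingleton) :
    sInf (lipschitzBounds S T) = 0 := by
  rcases (lipschitzBounds S T).eq_empty_or_nonempty with hempty | ⟨_, f, hmaps, hsurj, -⟩
  · rw [hempty, Real.sInf_empty]
  · have huniv : lipschitzBounds S T = univ :=
      eq_univ_of_forall fun L ↦ ⟨f, hmaps, hsurj, fun x hx y hy ↦ by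
        simp only [hS hx hy, zdist_self, mul_zero, le_refl]⟩
    rw [huniv, Real.sInf_univ]

variable {g : (Fin d → ℤ) → (Fin e → ℤ)}

lemma lipschitzBounds_image_subset (hS : (S : Set (Fin d → ℤ)).Nontrivial) (hinj : InjOn g S)
    (hg : ∀ x ∈ S, ∀ y ∈ S, zdist (g x) (g y) ≤ zdist x y) :
    lipschitzBounds (S.image g) T ⊆ lipschitzBounds S T := by
  intro L hL
  have hL0 : 0 ≤ L := nonneg_of_mem_lipschitzBounds
    (by simpa only [Finset.coe_image] using hS.image_of_injOn hinj) hL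
  obtain ⟨f, hmaps, hsurj, hf⟩ := hL
  rw [Finset.coe_image] at hmaps hsurj
  refine ⟨f ∘ g, hmaps.comp (mapsTo_image g S), hsurj.comp (surjOn_image g S), ?_⟩
  intro x hx y hy
  calc zdist (f (g x)) (f (g y))
      ≤ L * zdist (g x) (g y) :=
        hf _ (Finset.mem_image_of_mem g hx) _ (Finset.mem_image_of_mem g hy)
    _ ≤ L * zdist x y := mul_le_mul_of_nonneg_left (hg x hx y hy) hL0

lemma sInf_lipschitzBounds_le_sInf_image (hT : T.Nonempty) (hcard : T.card ≤ S.card)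
    (hinj : InjOn g S) (hg : ∀ x ∈ S, ∀ y ∈ S, zdist (g x) (g y) ≤ zdist x y) :
    sInf (lipschitzBounds S T) ≤ sInf (lipschitzBounds (S.image g) T) := by
  rcases (S : Set (Fin d → ℤ)).subsingleton_or_nontrivial with hS | hS
  · have himage : (S.image g : Set (Fin e → ℤ)).Subsingleton := by
      simpa only [Finset.coe_image] using hS.image g
    rw [sInf_lipschitzBounds_of_subsingleton hS, sInf_lipschitzBounds_of_subsingleton himage]
  · have hbdd : BddBelow (lipschitzBounds S T) := ⟨0, fun _ ↦ nonneg_of_mem_lipschitzBounds hS⟩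
    have hcard_image : T.card ≤ (S.image g).card := by rwa [Finset.card_image_of_injOn hinj]
    exact csInf_le_csInf hbdd (lipschitzBounds_nonempty hT hcard_image)
      (lipschitzBounds_image_subset hS hinj hg)

end LipschitzSurjection

lemma Fleast_le_Fleast_image_compress {d n : ℕ} (hn : 1 ≤ n) {S : Finset (Fin d → ℤ)}
    (hS : n ^ d ≤ S.card) : Fleast d n S ≤ Fleast d n (S.image (compress S)) := by
  have hgrid : (grid d n).Nonempty :=
    Finset.card_pos.mp ((card_grid d n).symm ▸ pow_pos hn d)
  simp only [Fleast_eq_sInf_lipschitzBounds]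
  exact sInf_lipschitzBounds_le_sInf_image hgrid ((card_grid d n).trans_le hS)
    (compress_injOn S) fun x _ y _ ↦ zdist_compress_le S x y

theorem stmt_13_general (d n m : ℕ) (hd : 1 ≤ d) (hn : 1 ≤ n) (hm : n ^ d ≤ m) :
    ∃ S₀ ⊆ grid d m, S₀.card = m ∧
      ∀ S : Finset (Fin d → ℤ), S.card = m → Fleast d n S ≤ Fleast d n S₀ := by
  have hne : ((grid d m).powersetCard m).Nonempty := by
    rw [Finset.powersetCard_nonempty, card_grid]
    exact Nat.le_self_pow (Nat.one_le_iff_ne_zero.mp hd) m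
  obtain ⟨S₀, hS₀, hmax⟩ := Finset.exists_max_image _ (Fleast d n) hne
  obtain ⟨hgrid, hcard⟩ := Finset.mem_powersetCard.mp hS₀
  refine ⟨S₀, hgrid, hcard, ?_⟩
  rintro S rfl
  calc Fleast d n S
      ≤ Fleast d n (S.image (compress S)) := Fleast_le_Fleast_image_compress hn hm
    _ ≤ Fleast d n S₀ := hmax _ <| Finset.mem_powersetCard.mpr
        ⟨image_compress_subset_grid S, Finset.card_image_of_injOn (compress_injOn S)⟩

/-- The supremum of `F_n` over all `n^d`-element subsets of `ℤ^d` is attained on an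
`n^d`-element subset of the finite grid `{1,…,n^d}^d`. -/
theorem stmt_13 (d n : ℕ) (hd : 1 ≤ d) (hn : 1 ≤ n) :
    ∃ S₀ : Finset (Fin d → ℤ),
      (∀ x ∈ S₀, ∀ i, 1 ≤ x i ∧ x i ≤ ((n ^ d : ℕ) : ℤ)) ∧
      S₀.card = n ^ d ∧
      (∀ S : Finset (Fin d → ℤ), S.card = n ^ d → Fleast d n S ≤ Fleast d n S₀) :=
  (stmt_13_general d n (n ^ d) hd hn le_rfl).imp fun _ ⟨hgrid, hcard, hmax⟩ ↦
    ⟨fun _ hx ↦ mem_grid.mp (hgrid hx), hcard, hmax⟩
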